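/- For every ε > 0 and every 0 < δ < ε, there exists a single neural network NN : ℝ^{3N} → ℝ^{1+2N} such that for all market parameters (K, π) ∈ [0, K̄]^N × [0, π̄]^{2N}: (i) if the market admits model-free static arbitrage of magnitude ε (i.e. some (a,h) ∈ Γ(K) with f(π,a,h) ≤ −ε), then NN(K,π) ∈ Γ(K) and f(π, NN(K,π)) ≤ −δ; (ii) if the market admits no model-free static arbitrage (V(K,π) = 0), then NN(K,π) ∈ Γ(K) and f(π, NN(K,π)) ≤ ε − δ. -/

import Mathlib

/-- Feedforward neural networks `ℝ^m → ℝ^n` with activation `σ`. -/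
inductive IsNN (σ : ℝ → ℝ) : (m n : ℕ) → ((Fin m → ℝ) → (Fin n → ℝ)) → Prop
  | affine {m n : ℕ} (A : Fin n → Fin m → ℝ) (b : Fin n → ℝ) :
      IsNN σ m n (fun (x : Fin m → ℝ) (i : Fin n) => (∑ j, A i j * x j) + b i)
  | comp {m k n : ℕ} (A : Fin n → Fin k → ℝ) (b : Fin n → ℝ)
      {F : (Fin m → ℝ) → (Fin k → ℝ)} (hF : IsNN σ m k F) :
      IsNN σ m n (fun (x : Fin m → ℝ) (i : Fin n) => (∑ j, A i j * σ (F x j)) + b i)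

/-- Payoff at scenario `S` of the static strategy `q = (a, h⁺, h⁻)`. -/
noncomputable def payoffI {d N : ℕ} (Ψ : Fin N → (Fin d → ℝ) → ℝ → ℝ) (K : Fin N → ℝ)
    (S : Fin d → ℝ) (q : ℝ × (Fin N → ℝ) × (Fin N → ℝ)) : ℝ :=
  q.1 + ∑ i, (q.2.1 i - q.2.2 i) * Ψ i S (K i)

/-- Price of the static strategy `q = (a, h⁺, h⁻)` given bid/ask prices `πp`, `πm`. -/
noncomputable def priceF {N : ℕ} (πp πm : Fin N → ℝ) (q : ℝ × (Fin N → ℝ) × (Fin N → ℝ)) : ℝ :=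
  q.1 + ∑ i, (q.2.1 i * πp i - q.2.2 i * πm i)

/-- The set `Γ(K)` of static strategies superhedging the zero payoff on the prediction set. -/
def feasSet {d N : ℕ} (𝒮 : Set (Fin d → ℝ)) (Ψ : Fin N → (Fin d → ℝ) → ℝ → ℝ)
    (aLow Hbar : ℝ) (K : Fin N → ℝ) : Set (ℝ × (Fin N → ℝ) × (Fin N → ℝ)) :=
  {q | aLow ≤ q.1 ∧ (∀ i, q.2.1 i ∈ Set.Icc 0 Hbar) ∧ (∀ i, q.2.2 i ∈ Set.Icc 0 Hbar) ∧
       ∀ S ∈ 𝒮, 0 ≤ payoffI Ψ K S q}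

/-- Reading a strategy `(a, h⁺, h⁻)` off a network output vector in `ℝ^{1+2N}`. -/
def outStrat {N : ℕ} (O : Fin (1 + N + N) → ℝ) : ℝ × (Fin N → ℝ) × (Fin N → ℝ) :=
  (O ⟨0, by omega⟩,
   fun i => O ⟨1 + i.1, by have := i.isLt; omega⟩,
   fun i => O ⟨1 + N + i.1, by have := i.isLt; omega⟩)

/-
A strategy of price at most `V + ε - δ` satisfies both claims, so one network has to select from
the sets `T m` of feasible strategies that are optimal up to `ε - δ`, simultaneously for all market
parameters `m`. These sets are convex. Moving an almost optimal strategy slightly towards a Slater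
point of the superhedging constraints puts it in the interior of `T m`, with a ball that stays
inside `T m'` for nearby `m'`: changing the strikes costs only a little extra cash, uniformly over
the scenarios. A partition of unity then glues local choices into a continuous selection with
values in the interior, and uniform approximation by a network stays inside.

The functions computed by networks with one hidden layer are dense because the closed span of the
ridge functions `σ (w · x + b)` also contains those of the mollifications of `σ` and all their
derivatives in `w`. The derivatives of order `k` at `w = 0` are the monomials of degree `k` times
the `k`-th derivative at `b` of a mollification. If that vanished for all `b` and all
mollifications, these would be polynomials of degree less than `k`, and so would their limit `σ`.
-/

open Filter MeasureTheory Polynomial Topology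
open scoped ContDiff Convolution

section ClosedSubmodule

variable {E : Type*} [NormedAddCommGroup E] [NormedSpace ℝ E] {M : Submodule ℝ E}

lemma mem_of_hasDerivAt (hM : IsClosed (M : Set E)) {f : ℝ → E} {f' : E} {x : ℝ}
    (hf : HasDerivAt f f' x) (hfM : ∀ y, f y ∈ M) : f' ∈ M :=
  hM.mem_of_tendsto hf.tendsto_slope <| .of_forall fun y =>
    M.smul_mem _ (M.sub_mem (hfM y) (hfM x))

lemma integral_mem_of_ae_mem [CompleteSpace E] {α : Type*} [MeasurableSpace α] {μ : Measure α}
    (hM : IsClosed (M : Set E)) {f : α → E} (hfM : ∀ᵐ a ∂μ, f a ∈ M) : ∫ a, f a ∂μ ∈ M := by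
  by_cases hf : Integrable f μ
  · have : IsClosed (M : Set E) := hM
    have hquot : M.mkQL (∫ a, f a ∂μ) = 0 := by
      rw [← ContinuousLinearMap.integral_comp_comm _ hf]
      exact integral_eq_zero_of_ae <|
        hfM.mono fun a ha => (Submodule.Quotient.mk_eq_zero M).2 ha
    exact (Submodule.Quotient.mk_eq_zero M).1 hquot
  · rw [integral_undef hf]
    exact M.zero_mem

end ClosedSubmodule

section RidgeProfile

variable {X : Type*} [TopologicalSpace X] [CompactSpace X]

lemma hasDerivAt_comp_add_smul {g g' : C(ℝ, ℝ)} (hg : ∀ t, HasDerivAt g (g' t) t)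
    (u v : C(X, ℝ)) (s : ℝ) :
    HasDerivAt (fun r : ℝ => g.comp (u + r • v)) (v * g'.comp (u + s • v)) s := by
  have hcont : Continuous fun r : ℝ => v * g'.comp (u + r • v) :=
    continuous_const.mul <| g'.continuous_postcomp.comp (by fun_prop)
  have hpoint (x : X) (r : ℝ) :
      HasDerivAt (fun r => g (u x + r * v x)) (v x * g' (u x + r * v x)) r := by
    have hline : HasDerivAt (fun r => u x + r * v x) (v x) r := by
      simpa using ((hasDerivAt_id r).mul_const (v x)).const_add (u x)
    exact ((hg _).comp r hline).congr_deriv (mul_comm _ _)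
  -- The fundamental theorem of calculus in `C(X, ℝ)` makes the derivative uniform in `x`.
  have hFTC : (fun r : ℝ => g.comp (u + r • v)) =
      fun r => g.comp u + ∫ t in (0 : ℝ)..r, v * g'.comp (u + t • v) := by
    funext r
    ext x
    have heval : (∫ t in (0 : ℝ)..r, v * g'.comp (u + t • v)) x =
        ∫ t in (0 : ℝ)..r, v x * g' (u x + t * v x) :=
      ((ContinuousMap.evalCLM ℝ x : C(X, ℝ) →L[ℝ] ℝ).intervalIntegral_comp_comm
        (hcont.intervalIntegrable 0 r)).symm
    rw [ContinuousMap.add_apply, heval, intervalIntegral.integral_eq_sub_of_hasDerivAt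
      (fun t _ => hpoint x t) (by apply Continuous.intervalIntegrable; fun_prop)]
    simp
  rw [hFTC]
  exact (intervalIntegral.integral_hasDerivAt_right (hcont.intervalIntegrable 0 s)
    (hcont.stronglyMeasurableAtFilter _ _) hcont.continuousAt).const_add _

/-- `g` is a ridge profile of weight `p` for the submodule `M` of `C(X, ℝ)` and the directions `W`
if `M` contains all the weighted ridge functions `p · g(u + b)`, with `u ∈ W` and `b` constant. -/
def IsRidgeProfile (M W : Submodule ℝ C(X, ℝ)) (p : C(X, ℝ)) (g : C(ℝ, ℝ)) : Prop :=
  ∀ u ∈ W, ∀ b : ℝ, p * g.comp (u + ContinuousMap.const X b) ∈ M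

namespace IsRidgeProfile

variable {M W : Submodule ℝ C(X, ℝ)} {p : C(X, ℝ)}

lemma mul_deriv (hM : IsClosed (M : Set C(X, ℝ))) {g g' : C(ℝ, ℝ)}
    (h : IsRidgeProfile M W p g) (hg : ∀ t, HasDerivAt g (g' t) t) {v : C(X, ℝ)} (hv : v ∈ W) :
    IsRidgeProfile M W (p * v) g' := by
  intro u hu b
  have hcurve := (hasDerivAt_comp_add_smul hg (u + ContinuousMap.const X b) v 0).const_mul p
  rw [zero_smul, add_zero, ← mul_assoc] at hcurve
  refine mem_of_hasDerivAt hM hcurve fun s => ?_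
  rw [add_right_comm]
  exact h _ (W.add_mem hu (W.smul_mem s hv)) b

lemma mul_list_prod (hM : IsClosed (M : Set C(X, ℝ))) {G : ℕ → C(ℝ, ℝ)}
    (hG : ∀ k t, HasDerivAt (G k) (G (k + 1) t) t) (h : IsRidgeProfile M W p (G 0))
    {l : List C(X, ℝ)} (hl : ∀ v ∈ l, v ∈ W) :
    IsRidgeProfile M W (p * l.prod) (G l.length) := by
  induction l with
  | nil => simpa using h
  | cons v l ih =>
    rw [List.forall_mem_cons] at hl
    have := (ih hl.2).mul_deriv hM (hG _) hl.1
    rwa [mul_assoc, mul_comm l.prod, ← List.prod_cons] at this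

end IsRidgeProfile

/-- The convolution of `σ` with the normalised bump function `φ`. -/
noncomputable def mollify (φ : ContDiffBump (0 : ℝ)) (σ : ℝ → ℝ) : ℝ → ℝ :=
  φ.normed volume ⋆[ContinuousLinearMap.lsmul ℝ ℝ] σ

lemma contDiff_mollify (φ : ContDiffBump (0 : ℝ)) {σ : ℝ → ℝ} (hσ : Continuous σ) :
    ContDiff ℝ ∞ (mollify φ σ) :=
  φ.hasCompactSupport_normed.contDiff_convolution_left _ φ.contDiff_normed hσ.locallyIntegrable

protected lemma IsRidgeProfile.mollify {M W : Submodule ℝ C(X, ℝ)} {p : C(X, ℝ)}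
    (hM : IsClosed (M : Set C(X, ℝ))) {σ : C(ℝ, ℝ)}
    (h : IsRidgeProfile M W p σ) (φ : ContDiffBump (0 : ℝ)) :
    IsRidgeProfile M W p ⟨mollify φ σ, (contDiff_mollify φ σ.continuous).continuous⟩ := by
  intro u hu b
  let F : ℝ → C(X, ℝ) := fun s =>
    φ.normed volume s • (p * σ.comp (u + ContinuousMap.const X (b - s)))
  have hF : Integrable F :=
    (φ.continuous_normed.smul <| continuous_const.mul <| σ.continuous_postcomp.comp <|
      continuous_const.add <| ContinuousMap.continuous_const'.comp <|
        continuous_const.sub continuous_id).integrable_of_hasCompactSupport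
      φ.hasCompactSupport_normed.smul_right
  have hFM : ∫ s, F s ∈ M :=
    integral_mem_of_ae_mem hM <| .of_forall fun s => M.smul_mem _ (h u hu _)
  convert hFM using 1
  ext x
  rw [ContinuousMap.integral_apply hF]
  simp only [F, mollify, convolution, ContinuousMap.mul_apply, ContinuousMap.comp_apply,
    ContinuousMap.coe_mk, ContinuousMap.add_apply, ContinuousMap.const_apply,
    ContinuousMap.smul_apply, ContinuousLinearMap.lsmul_apply, smul_eq_mul, add_sub_assoc,
    mul_left_comm _ (p x), integral_const_mul]

lemma exists_polynomial_of_iteratedDeriv_eq_zero {n : ℕ} {f : ℝ → ℝ} (hf : ContDiff ℝ n f)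
    (h : iteratedDeriv n f = 0) : ∃ p ∈ degreeLT ℝ n, ∀ x, f x = p.eval x := by
  cases n with
  | zero => exact ⟨0, zero_mem _, fun x => by simpa using congrFun h x⟩
  | succ n =>
    refine ⟨∑ i ∈ Finset.range (n + 1), monomial i (iteratedDeriv i f 0 / i.factorial),
      sum_mem fun i hi => ?_, fun x => ?_⟩
    · rw [mem_degreeLT]
      exact (degree_monomial_le _ _).trans_lt (mod_cast Finset.mem_range.1 hi)
    rcases eq_or_ne x 0 with rfl | hx
    · simp [eval_finsetSum, Finset.sum_range_succ']
    · obtain ⟨y, -, hy⟩ := taylor_mean_remainder_lagrange_iteratedDeriv hx.symm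
        (n := n) (mod_cast hf.contDiffOn)
      rw [h, Pi.zero_apply, zero_mul, zero_div, sub_eq_zero] at hy
      rw [hy, taylor_within_apply, eval_finsetSum]
      refine Finset.sum_congr rfl fun i hi => ?_
      have hi' : (i : WithTop ℕ∞) ≤ (n + 1 : ℕ) := mod_cast (Finset.mem_range.1 hi).le
      rw [iteratedDerivWithin_eq_iteratedDeriv (uniqueDiffOn_uIcc hx.symm)
        (hf.of_le hi').contDiffAt Set.left_mem_uIcc, eval_monomial, sub_zero, smul_eq_mul,
        div_eq_inv_mul, mul_right_comm]

lemma isClosed_setOf_degreeLT_eval (n : ℕ) :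
    IsClosed {f : ℝ → ℝ | ∃ p ∈ degreeLT ℝ n, ∀ x, f x = p.eval x} := by
  have : FiniteDimensional ℝ (degreeLT ℝ n) := .of_basis (degreeLT.basis ℝ n)
  convert ((degreeLT ℝ n).map (LinearMap.pi leval)).closed_of_finiteDimensional using 1
  ext f
  simp [funext_iff, eq_comm]

lemma exists_contDiffBump_tendsto_mollify {σ : ℝ → ℝ} (hσ : Continuous σ) :
    ∃ φ : ℕ → ContDiffBump (0 : ℝ), Tendsto (fun k => mollify (φ k) σ) atTop (𝓝 σ) := by
  let φ (k : ℕ) : ContDiffBump (0 : ℝ) :=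
    ⟨1 / (k + 1) / 2, 1 / (k + 1), by positivity, half_lt_self (by positivity)⟩
  exact ⟨φ, tendsto_pi_nhds.2 fun t => ContDiffBump.convolution_tendsto_right_of_continuous
    tendsto_one_div_add_atTop_nhds_zero_nat hσ t⟩

lemma exists_iteratedDeriv_mollify_ne_zero {σ : ℝ → ℝ} (hσ : Continuous σ)
    (hσpoly : ¬∃ p : ℝ[X], ∀ t, σ t = p.eval t) (n : ℕ) :
    ∃ φ b, iteratedDeriv n (mollify φ σ) b ≠ 0 := by
  by_contra! hzero
  obtain ⟨φ, hφ⟩ := exists_contDiffBump_tendsto_mollify hσ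
  obtain ⟨p, -, hp⟩ := (isClosed_setOf_degreeLT_eval n).mem_of_tendsto hφ <|
    .of_forall fun k => exists_polynomial_of_iteratedDeriv_eq_zero
      ((contDiff_mollify (φ k) hσ).of_le (mod_cast le_top)) (funext (hzero (φ k)))
  exact hσpoly ⟨p, hp⟩

lemma IsRidgeProfile.list_prod_mem {M W : Submodule ℝ C(X, ℝ)} (hM : IsClosed (M : Set C(X, ℝ)))
    {σ : C(ℝ, ℝ)} (hσpoly : ¬∃ p : ℝ[X], ∀ t, σ t = p.eval t) (h : IsRidgeProfile M W 1 σ)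
    {l : List C(X, ℝ)} (hl : ∀ v ∈ l, v ∈ W) : l.prod ∈ M := by
  obtain ⟨φ, b, hb⟩ := exists_iteratedDeriv_mollify_ne_zero σ.continuous hσpoly l.length
  have hsmooth := contDiff_mollify φ σ.continuous
  let G (k : ℕ) : C(ℝ, ℝ) :=
    ⟨iteratedDeriv k (mollify φ σ), hsmooth.continuous_iteratedDeriv k (mod_cast le_top)⟩
  have hG (k : ℕ) (t : ℝ) : HasDerivAt (G k) (G (k + 1) t) t := by
    simp only [G, ContinuousMap.coe_mk, iteratedDeriv_succ]
    exact (hsmooth.differentiable_iteratedDeriv k (mod_cast ENat.natCast_lt_top k) t).hasDerivAt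
  have hφ : IsRidgeProfile M W 1 (G 0) := by
    simpa only [G, iteratedDeriv_zero] using h.mollify hM φ
  have hprod := hφ.mul_list_prod hM hG hl 0 W.zero_mem b
  convert M.smul_mem (G l.length b)⁻¹ hprod using 1
  ext x
  simp [field, G]

lemma IsRidgeProfile.eq_top {M W : Submodule ℝ C(X, ℝ)} (hM : IsClosed (M : Set C(X, ℝ)))
    {σ : C(ℝ, ℝ)} (hσpoly : ¬∃ p : ℝ[X], ∀ t, σ t = p.eval t) (h : IsRidgeProfile M W 1 σ)
    (hW : (Algebra.adjoin ℝ (W : Set C(X, ℝ))).SeparatesPoints) : M = ⊤ := by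
  have hadjoin : (Algebra.adjoin ℝ (W : Set C(X, ℝ))).toSubmodule ≤ M := by
    rw [Algebra.adjoin_eq_span, Submodule.span_le]
    intro f hf
    obtain ⟨l, hl, rfl⟩ := Submonoid.exists_list_of_mem_closure hf
    exact h.list_prod_mem hM hσpoly hl
  refine eq_top_iff.2 fun f _ => closure_minimal hadjoin hM ?_
  have hf : f ∈ (Algebra.adjoin ℝ (W : Set C(X, ℝ))).topologicalClosure := by
    rw [ContinuousMap.subalgebra_topologicalClosure_eq_top_of_separatesPoints _ hW]
    exact Algebra.mem_top
  exact hf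

end RidgeProfile

section NeuralNetwork

variable {X : Type*} [TopologicalSpace X] {m n : ℕ}

lemma IsNN.continuous {σ : ℝ → ℝ} (hσ : Continuous σ) {F : (Fin m → ℝ) → Fin n → ℝ}
    (hF : IsNN σ m n F) : Continuous F := by
  induction hF with
  | affine A b => fun_prop
  | comp A b _ ih => fun_prop

lemma isNN_sum {ι : Type*} [Fintype ι] (σ : ℝ → ℝ) (w : ι → Fin m → ℝ) (b : ι → ℝ)
    (A : Fin n → ι → ℝ) :
    IsNN σ m n fun x i => ∑ k, A i k * σ ((∑ j, w k j * x j) + b k) := by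
  let e := Fintype.equivFin ι
  convert IsNN.comp (fun i k => A i (e.symm k)) (fun _ => 0)
    (IsNN.affine (σ := σ) (fun k => w (e.symm k)) (fun k => b (e.symm k))) using 3 with x i
  rw [add_zero]
  exact (e.symm.sum_comp _).symm

lemma isNN_finsuppSum (σ : ℝ → ℝ) (c : Fin n → (Fin m → ℝ) × ℝ →₀ ℝ) :
    IsNN σ m n fun x i => (c i).sum fun p a => a * σ ((∑ j, p.1 j * x j) + p.2) := by
  classical
  let T := Finset.univ.biUnion fun i => (c i).support
  convert isNN_sum σ (fun p : T => p.1.1) (fun p => p.1.2) fun i p => c i p using 3 with x i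
  rw [Finsupp.sum_of_support_subset _
    (Finset.subset_biUnion_of_mem (fun i => (c i).support) (Finset.mem_univ i)) _ (by simp)]
  exact (Finset.sum_coe_sort T _).symm

/-- The linear forms `x ↦ ∑ j, w j * φ x j` in the coordinates of `φ : X → ℝ^m`. -/
noncomputable def linearForm (φ : C(X, Fin m → ℝ)) : (Fin m → ℝ) →ₗ[ℝ] C(X, ℝ) :=
  Fintype.linearCombination ℝ fun j => (⟨fun y => y j, continuous_apply j⟩ : C(Fin m → ℝ, ℝ)).comp φ

lemma linearForm_apply (φ : C(X, Fin m → ℝ)) (w : Fin m → ℝ) (x : X) :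
    linearForm φ w x = ∑ j, w j * φ x j := by
  simp [linearForm, Fintype.linearCombination_apply]

/-- The one-neuron functions `x ↦ σ (w · φ x + b)`, indexed by `(w, b)`. -/
noncomputable def neuron (σ : C(ℝ, ℝ)) (φ : C(X, Fin m → ℝ)) (p : (Fin m → ℝ) × ℝ) : C(X, ℝ) :=
  σ.comp (linearForm φ p.1 + ContinuousMap.const X p.2)

lemma neuron_apply (σ : C(ℝ, ℝ)) (φ : C(X, Fin m → ℝ)) (p : (Fin m → ℝ) × ℝ) (x : X) :
    neuron σ φ p x = σ ((∑ j, p.1 j * φ x j) + p.2) := by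
  simp [neuron, linearForm_apply]

variable [CompactSpace X]

lemma topologicalClosure_span_neuron {σ : C(ℝ, ℝ)} (hσpoly : ¬∃ p : ℝ[X], ∀ t, σ t = p.eval t)
    {φ : C(X, Fin m → ℝ)} (hφ : Function.Injective φ) :
    (Submodule.span ℝ (Set.range (neuron σ φ))).topologicalClosure = ⊤ := by
  refine IsRidgeProfile.eq_top (W := (linearForm φ).range)
    (Submodule.isClosed_topologicalClosure _) hσpoly ?_ ?_
  · rintro _ ⟨w, rfl⟩ b
    rw [one_mul]
    exact Submodule.le_topologicalClosure _ (Submodule.subset_span ⟨(w, b), rfl⟩)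
  · intro x y hxy
    obtain ⟨j, hj⟩ := Function.ne_iff.1 (hφ.ne hxy)
    refine ⟨_, ⟨linearForm φ (Pi.single j 1), Algebra.subset_adjoin ⟨_, rfl⟩, rfl⟩, ?_⟩
    simpa [linearForm_apply, Pi.single_apply] using hj

lemma dense_isNN_comp {σ : ℝ → ℝ} (hσ : Continuous σ)
    (hσpoly : ¬∃ p : ℝ[X], ∀ t, σ t = p.eval t)
    {φ : C(X, Fin m → ℝ)} (hφ : Function.Injective φ) :
    Dense {f : C(X, Fin n → ℝ) | ∃ F, IsNN σ m n F ∧ ⇑f = F ∘ φ} := by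
  refine Metric.dense_iff.2 fun g r hr => ?_
  let gᵢ (i : Fin n) : C(X, ℝ) := ⟨fun x => g x i, by fun_prop⟩
  have hspan (i : Fin n) :
      ∃ f ∈ Submodule.span ℝ (Set.range (neuron ⟨σ, hσ⟩ φ)), dist (gᵢ i) f < r := by
    refine Metric.mem_closure_iff.1 ?_ r hr
    rw [← Submodule.topologicalClosure_coe, topologicalClosure_span_neuron hσpoly hφ]
    trivial
  choose f hf hfg using hspan
  choose c hc using fun i => Finsupp.mem_span_range_iff_exists_finsupp.1 (hf i)
  have hNN := isNN_finsuppSum σ c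
  refine ⟨⟨_, (hNN.continuous hσ).comp φ.continuous⟩, ?_, _, hNN, rfl⟩
  refine (ContinuousMap.dist_lt_iff hr).2 fun x => (dist_pi_lt_iff hr).2 fun i => ?_
  have hsum : ((c i).sum fun p a => a * σ ((∑ j, p.1 j * φ x j) + p.2)) = f i x := by
    simp [← hc i, Finsupp.sum, ContinuousMap.sum_apply, neuron_apply]
  rw [ContinuousMap.coe_mk, Function.comp_apply, hsum, dist_comm]
  exact ((gᵢ i).dist_apply_le_dist x).trans_lt (hfg i)

end NeuralNetwork

section Selection

variable {X E : Type*} [TopologicalSpace X] [NormedAddCommGroup E] [NormedSpace ℝ E]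

lemma convex_setOf_mem_interior {T : X → Set E} (hT : ∀ x, Convex ℝ (T x)) (x : X) :
    Convex ℝ {y | (x, y) ∈ interior {z : X × E | z.2 ∈ T z.1}} := by
  intro y₁ hy₁ y₂ hy₂ a b ha hb hab
  simp only [Set.mem_ofPred_eq, mem_interior_iff_mem_nhds] at hy₁ hy₂ ⊢
  have hshift (y : E) : Tendsto (fun z : X × E => (z.1, y + (z.2 - (a • y₁ + b • y₂))))
      (𝓝 (x, a • y₁ + b • y₂)) (𝓝 (x, y)) :=
    Continuous.tendsto' (by fun_prop) _ _ (by simp)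
  filter_upwards [hshift y₁ hy₁, hshift y₂ hy₂] with z hz₁ hz₂
  convert hT z.1 hz₁ hz₂ ha hb hab using 1
  obtain rfl : b = 1 - a := by linarith
  module

lemma exists_mem_forall_mem_of_dense [CompactSpace X] [T2Space X] {T : X → Set E}
    (hT : ∀ x, Convex ℝ (T x)) (hTx : ∀ x, ∃ y, ∀ᶠ z in 𝓝 (x, y), z.2 ∈ T z.1)
    {D : Set C(X, E)} (hD : Dense D) : ∃ f ∈ D, ∀ x, f x ∈ T x := by
  let U := interior {z : X × E | z.2 ∈ T z.1}
  obtain ⟨g, hg⟩ : ∃ g : C(X, E), ∀ x, (x, g x) ∈ U := by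
    refine exists_continuous_forall_mem_convex_of_local_const
      (t := fun x => {y | (x, y) ∈ U}) (convex_setOf_mem_interior hT) fun x => ?_
    obtain ⟨y, hy⟩ := hTx x
    exact ⟨y, (Continuous.prodMk_left y).continuousAt.eventually_mem
      (isOpen_interior.mem_nhds (mem_interior_iff_mem_nhds.2 hy))⟩
  have hopen : IsOpen {h : C(X, E) | Set.range ((ContinuousMap.id X).prodMk h) ⊆ U} :=
    (ContinuousMap.isOpen_setOfPred_range_subset isOpen_interior).preimage <|
      ContinuousMap.continuous_of_continuous_uncurry _ (continuous_snd.prodMk continuous_eval)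
  obtain ⟨f, hfU, hfD⟩ := hD.inter_open_nonempty _ hopen ⟨g, Set.range_subset_iff.2 hg⟩
  exact ⟨f, hfD, fun x => interior_subset (s := {z : X × E | z.2 ∈ T z.1}) (hfU ⟨x, rfl⟩)⟩

end Selection

lemma exists_isNN_forall_mem {X : Type*} [TopologicalSpace X] [CompactSpace X] {m n : ℕ}
    {σ : ℝ → ℝ} (hσ : Continuous σ) (hσpoly : ¬∃ p : ℝ[X], ∀ t, σ t = p.eval t)
    {φ : X → Fin m → ℝ} (hφ : Continuous φ) (hφinj : Function.Injective φ)
    {T : X → Set (Fin n → ℝ)} (hT : ∀ x, Convex ℝ (T x))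
    (hTx : ∀ x, ∃ y, ∀ᶠ z in 𝓝 (x, y), z.2 ∈ T z.1) :
    ∃ F, IsNN σ m n F ∧ ∀ x, F (φ x) ∈ T x := by
  have : T2Space X := .of_injective_continuous hφinj hφ
  obtain ⟨f, ⟨F, hF, hfF⟩, hfT⟩ :=
    exists_mem_forall_mem_of_dense hT hTx (dense_isNN_comp (φ := ⟨φ, hφ⟩) hσ hσpoly hφinj)
  exact ⟨F, hF, fun x => by simpa [hfF] using hfT x⟩

lemma closedBall_lineMap_subset {E : Type*} [NormedAddCommGroup E] [NormedSpace ℝ E] {C : Set E}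
    (hC : Convex ℝ C) {p s : E} {r t : ℝ} (hp : p ∈ C) (hs : Metric.closedBall s r ⊆ C)
    (ht : 0 < t) (ht1 : t ≤ 1) :
    Metric.closedBall (AffineMap.lineMap p s t) (t * r) ⊆ C := by
  intro q hq
  let s' := s + t⁻¹ • (q - AffineMap.lineMap p s t)
  have hs' : s' ∈ Metric.closedBall s r := by
    rw [mem_closedBall_iff_norm] at hq ⊢
    rw [add_sub_cancel_left, norm_smul, norm_inv, Real.norm_of_nonneg ht.le]
    exact (inv_mul_le_iff₀ ht).2 hq
  have hq' : q = AffineMap.lineMap p s' t := by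
    simp only [s', AffineMap.lineMap_apply_module, smul_add, smul_inv_smul₀ ht.ne']
    module
  rw [hq']
  exact hC.lineMap_mem hp (hs hs') ⟨ht.le, ht1⟩

section Market

variable {d N : ℕ}

/-- Static strategies `(a, h⁺, h⁻)`: a cash position, long positions and short positions in the
`N` options. -/
abbrev Strategy (N : ℕ) : Type := ℝ × (Fin N → ℝ) × (Fin N → ℝ)

/-- Market parameters `(K, π⁺, π⁻)`: strikes, ask prices and bid prices of the `N` options. -/
abbrev MarketParams (N : ℕ) : Type := (Fin N → ℝ) × (Fin N → ℝ) × (Fin N → ℝ)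

/-- The vector of payoffs at scenario `S` of the options with strikes `K`. -/
def strikePayoff (Ψ : Fin N → (Fin d → ℝ) → ℝ → ℝ) (K : Fin N → ℝ) (S : Fin d → ℝ) : Fin N → ℝ :=
  fun i => Ψ i S (K i)

lemma payoffI_eq_priceF (Ψ : Fin N → (Fin d → ℝ) → ℝ → ℝ) (K : Fin N → ℝ) (S : Fin d → ℝ)
    (q : Strategy N) : payoffI Ψ K S q = priceF (strikePayoff Ψ K S) (strikePayoff Ψ K S) q := by
  simp only [payoffI, priceF, strikePayoff, sub_mul]

section Price

variable (x y : Fin N → ℝ)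

lemma isLinearMap_priceF : IsLinearMap ℝ (priceF x y) where
  map_add p q := by
    simp only [priceF, Prod.fst_add, Prod.snd_add, Pi.add_apply, add_mul, add_sub_add_comm,
      Finset.sum_add_distrib]
    ring
  map_smul c q := by
    simp only [priceF, Prod.smul_fst, Prod.smul_snd, Pi.smul_apply, smul_eq_mul, mul_add,
      Finset.mul_sum, mul_sub, mul_assoc]

lemma priceF_cash (κ : ℝ) : priceF x y (κ, 0, 0) = κ := by simp [priceF]

lemma priceF_add_cash (q : Strategy N) (κ : ℝ) :
    priceF x y (q + (κ, 0, 0)) = priceF x y q + κ := by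
  rw [(isLinearMap_priceF x y).map_add, priceF_cash]

lemma abs_priceF_le (q : Strategy N) :
    |priceF x y q| ≤ |q.1| + N * (‖x‖ + ‖y‖) * ‖q.2‖ := by
  have hterm (i : Fin N) : |q.2.1 i * x i - q.2.2 i * y i| ≤ (‖x‖ + ‖y‖) * ‖q.2‖ :=
    calc |q.2.1 i * x i - q.2.2 i * y i| ≤ |q.2.1 i * x i| + |q.2.2 i * y i| := abs_sub _ _
      _ = ‖q.2.1 i‖ * ‖x i‖ + ‖q.2.2 i‖ * ‖y i‖ := by simp only [abs_mul, Real.norm_eq_abs]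
      _ ≤ ‖q.2‖ * ‖x‖ + ‖q.2‖ * ‖y‖ := by
        gcongr
        · exact (norm_le_pi_norm _ i).trans (norm_fst_le q.2)
        · exact norm_le_pi_norm _ i
        · exact (norm_le_pi_norm _ i).trans (norm_snd_le q.2)
        · exact norm_le_pi_norm _ i
      _ = (‖x‖ + ‖y‖) * ‖q.2‖ := by ring
  calc |priceF x y q| ≤ |q.1| + |∑ i, (q.2.1 i * x i - q.2.2 i * y i)| := abs_add_le _ _
    _ ≤ |q.1| + ∑ _i : Fin N, (‖x‖ + ‖y‖) * ‖q.2‖ := by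
      gcongr
      exact (Finset.abs_sum_le_sum_abs _ _).trans (Finset.sum_le_sum fun i _ => hterm i)
    _ = |q.1| + N * (‖x‖ + ‖y‖) * ‖q.2‖ := by simp [mul_assoc]

lemma abs_priceF_sub_priceF_le (x' y' : Fin N → ℝ) (q : Strategy N) :
    |priceF x y q - priceF x' y' q| ≤ N * (‖x - x'‖ + ‖y - y'‖) * ‖q.2‖ := by
  have hsub : priceF x y q - priceF x' y' q = priceF (x - x') (y - y') (0, q.2) := by
    simp only [priceF, Pi.sub_apply, add_sub_add_left_eq_sub, zero_add, ← Finset.sum_sub_distrib]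
    congr! 1
    ring
  rw [hsub]
  exact (abs_priceF_le _ _ _).trans_eq (by simp)

lemma continuous_priceF :
    Continuous fun z : MarketParams N × Strategy N => priceF z.1.2.1 z.1.2.2 z.2 := by
  unfold priceF
  fun_prop

end Price

section Feasible

variable {𝒮 : Set (Fin d → ℝ)} {Ψ : Fin N → (Fin d → ℝ) → ℝ → ℝ} {aLow H : ℝ}
  {K K' : Fin N → ℝ} {q : Strategy N}

lemma norm_positions_le_of_mem_feasSet (hH : 0 ≤ H) (hq : q ∈ feasSet 𝒮 Ψ aLow H K) :
    ‖q.2‖ ≤ H := by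
  have hle {h : Fin N → ℝ} (hh : ∀ i, h i ∈ Set.Icc 0 H) : ‖h‖ ≤ H :=
    (pi_norm_le_iff_of_nonneg hH).2 fun i => abs_le.2 ⟨by linarith [(hh i).1], (hh i).2⟩
  exact norm_prod_le_iff.2 ⟨hle hq.2.1, hle hq.2.2.1⟩

lemma zero_mem_feasSet (ha : aLow ≤ 0) (hH : 0 ≤ H) : 0 ∈ feasSet 𝒮 Ψ aLow H K :=
  ⟨ha, fun _ => ⟨le_rfl, hH⟩, fun _ => ⟨le_rfl, hH⟩, fun _ _ => by simp [payoffI]⟩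

lemma convex_feasSet : Convex ℝ (feasSet 𝒮 Ψ aLow H K) := by
  have hpos : Convex ℝ {h : Fin N → ℝ | ∀ i, h i ∈ Set.Icc 0 H} := by
    simpa [Set.pi] using convex_pi (s := Set.univ) fun (_ : Fin N) _ => convex_Icc (𝕜 := ℝ) 0 H
  have hpay : Convex ℝ {q : Strategy N | ∀ S ∈ 𝒮, 0 ≤ payoffI Ψ K S q} := by
    simp only [Set.ofPred_forall, payoffI_eq_priceF]
    exact convex_iInter₂ fun S _ => convex_halfSpace_ge (isLinearMap_priceF _ _) 0
  have hfeas : feasSet 𝒮 Ψ aLow H K =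
      Set.Ici aLow ×ˢ {h | ∀ i, h i ∈ Set.Icc 0 H} ×ˢ {h | ∀ i, h i ∈ Set.Icc 0 H} ∩
        {q | ∀ S ∈ 𝒮, 0 ≤ payoffI Ψ K S q} := by
    ext q
    simp only [feasSet, Set.mem_inter_iff, Set.mem_prod, Set.mem_Ici, Set.mem_ofPred_eq, and_assoc]
  rw [hfeas]
  exact ((convex_Ici _).prod (hpos.prod hpos)).inter hpay

lemma add_cash_mem_feasSet (hH : 0 ≤ H) {κ : ℝ} (hκ : 0 ≤ κ) (hq : q ∈ feasSet 𝒮 Ψ aLow H K)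
    (hK : ∀ S ∈ 𝒮, 2 * N * H * ‖strikePayoff Ψ K' S - strikePayoff Ψ K S‖ ≤ κ) :
    q + (κ, 0, 0) ∈ feasSet 𝒮 Ψ aLow H K' := by
  refine ⟨hq.1.trans (le_add_of_nonneg_right hκ), by simpa using hq.2.1, by simpa using hq.2.2.1,
    fun S hS => ?_⟩
  have hpay := hq.2.2.2 S hS
  have hdist := neg_le_of_abs_le <| abs_priceF_sub_priceF_le (strikePayoff Ψ K' S)
    (strikePayoff Ψ K' S) (strikePayoff Ψ K S) (strikePayoff Ψ K S) q
  have hpos : N * (‖strikePayoff Ψ K' S - strikePayoff Ψ K S‖ +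
      ‖strikePayoff Ψ K' S - strikePayoff Ψ K S‖) * ‖q.2‖ ≤ κ :=
    calc _ ≤ N * (‖strikePayoff Ψ K' S - strikePayoff Ψ K S‖ +
          ‖strikePayoff Ψ K' S - strikePayoff Ψ K S‖) * H := by
          gcongr
          exact norm_positions_le_of_mem_feasSet hH hq
      _ = 2 * N * H * ‖strikePayoff Ψ K' S - strikePayoff Ψ K S‖ := by ring
      _ ≤ κ := hK S hS
  rw [payoffI_eq_priceF] at hpay ⊢
  rw [priceF_add_cash]
  linarith

end Feasible

section Stability

variable {𝒮 : Set (Fin d → ℝ)} {Ψ : Fin N → (Fin d → ℝ) → ℝ → ℝ} {aLow H : ℝ}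
  {B : Set (Fin N → ℝ)} {K₀ : Fin N → ℝ}

lemma eventually_add_cash_mem_feasSet
    (hΨ : EquicontinuousOn (fun (S : 𝒮) K => strikePayoff Ψ K S) B) (hH : 0 < H) (hK₀ : K₀ ∈ B)
    {κ : ℝ} (hκ : 0 < κ) :
    ∀ᶠ K in 𝓝[B] K₀,
      (∀ q ∈ feasSet 𝒮 Ψ aLow H K₀, q + (κ, 0, 0) ∈ feasSet 𝒮 Ψ aLow H K) ∧
        ∀ q ∈ feasSet 𝒮 Ψ aLow H K, q + (κ, 0, 0) ∈ feasSet 𝒮 Ψ aLow H K₀ := by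
  have hη : 0 < κ / (2 * N * H + 1) := by positivity
  filter_upwards [hΨ K₀ hK₀ _ (Metric.dist_mem_uniformity hη)] with K hK
  have hsmall (S) (hS : S ∈ 𝒮) :
      2 * N * H * ‖strikePayoff Ψ K₀ S - strikePayoff Ψ K S‖ ≤ κ := by
    have hlt : dist _ _ < _ := hK ⟨S, hS⟩
    rw [dist_eq_norm, lt_div_iff₀ (by positivity)] at hlt
    linarith [norm_nonneg (strikePayoff Ψ K₀ S - strikePayoff Ψ K S)]
  refine ⟨fun q hq => add_cash_mem_feasSet hH.le hκ.le hq fun S hS => ?_,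
    fun q hq => add_cash_mem_feasSet hH.le hκ.le hq hsmall⟩
  rw [norm_sub_rev]
  exact hsmall S hS

/-- One unit of cash with all long and short positions equal to `H / 2`: a Slater point of the
superhedging constraints. -/
noncomputable def slaterStrategy (N : ℕ) (H : ℝ) : Strategy N :=
  (1, fun _ => H / 2, fun _ => H / 2)

lemma payoffI_slaterStrategy (K : Fin N → ℝ) (S : Fin d → ℝ) :
    payoffI Ψ K S (slaterStrategy N H) = 1 := by
  simp [payoffI, slaterStrategy]

lemma exists_closedBall_slaterStrategy_subset_feasSet (ha : aLow ≤ 0) (hH : 0 < H) {C : ℝ}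
    (hC : ∀ K ∈ B, ∀ S ∈ 𝒮, ‖strikePayoff Ψ K S‖ ≤ C) :
    ∃ r > 0, ∀ K ∈ B, Metric.closedBall (slaterStrategy N H) r ⊆ feasSet 𝒮 Ψ aLow H K := by
  let L := 1 + 2 * N * |C|
  have hL : 1 ≤ L := le_add_of_nonneg_right (by positivity)
  refine ⟨min (H / 2) (1 / L), by positivity, fun K hK q hq => ?_⟩
  have hnorm := mem_closedBall_iff_norm.1 hq
  have hbound (S) (hS : S ∈ 𝒮) : 0 ≤ payoffI Ψ K S q := by
    have hdiff := neg_le_of_abs_le <|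
      abs_priceF_le (strikePayoff Ψ K S) (strikePayoff Ψ K S) (q - slaterStrategy N H)
    have hle : |(q - slaterStrategy N H).1| + N * (‖strikePayoff Ψ K S‖ + ‖strikePayoff Ψ K S‖) *
        ‖(q - slaterStrategy N H).2‖ ≤ 1 :=
      calc _ ≤ 1 / L + N * (|C| + |C|) * (1 / L) := by
            have hψ := (hC K hK S hS).trans (le_abs_self C)
            have hq' := hnorm.trans (min_le_right _ _)
            gcongr
            · exact (norm_fst_le _).trans hq'
            · exact (norm_snd_le _).trans hq'
        _ = 1 := by simp only [L]; field
    rw [(isLinearMap_priceF _ _).map_sub, ← payoffI_eq_priceF, ← payoffI_eq_priceF,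
      payoffI_slaterStrategy] at hdiff
    linarith
  have hpos {h : Fin N → ℝ} (hh : ‖h - fun _ => H / 2‖ ≤ H / 2) (i) : h i ∈ Set.Icc 0 H := by
    have := abs_le.1 ((norm_le_pi_norm _ i).trans hh)
    simp only [Pi.sub_apply] at this
    constructor <;> linarith
  have hq₂ := (norm_snd_le _).trans (hnorm.trans (min_le_left _ _))
  refine ⟨ha.trans ?_, hpos ((norm_fst_le _).trans hq₂), hpos ((norm_snd_le _).trans hq₂), hbound⟩
  have hcash := abs_le.1 ((norm_fst_le _).trans (hnorm.trans (min_le_right _ _)))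
  have h1L : 1 / L ≤ 1 := (div_le_one (by positivity)).2 hL
  simp only [Prod.fst_sub, slaterStrategy] at hcash
  linarith

end Stability

section NearOptimal

variable {𝒮 : Set (Fin d → ℝ)} {Ψ : Fin N → (Fin d → ℝ) → ℝ → ℝ} {aLow H γ : ℝ}
  {B : Set (Fin N → ℝ)} {m : MarketParams N}

/-- The superhedging strategies whose price exceeds the optimal value `V` of the market by at most
`γ`; spelled out without the infimum `V`, which is the junk value `0` when it does not exist. -/
def nearOptimalSet (𝒮 : Set (Fin d → ℝ)) (Ψ : Fin N → (Fin d → ℝ) → ℝ → ℝ) (aLow H γ : ℝ)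
    (m : MarketParams N) : Set (Strategy N) :=
  {q ∈ feasSet 𝒮 Ψ aLow H m.1 |
    ∀ q' ∈ feasSet 𝒮 Ψ aLow H m.1, priceF m.2.1 m.2.2 q ≤ priceF m.2.1 m.2.2 q' + γ}

lemma convex_nearOptimalSet : Convex ℝ (nearOptimalSet 𝒮 Ψ aLow H γ m) := by
  have hprice : Convex ℝ {q | ∀ q' ∈ feasSet 𝒮 Ψ aLow H m.1,
      priceF m.2.1 m.2.2 q ≤ priceF m.2.1 m.2.2 q' + γ} := by
    simp only [Set.ofPred_forall]
    exact convex_iInter₂ fun _ _ => convex_halfSpace_le (isLinearMap_priceF _ _) _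
  exact convex_feasSet.inter hprice

lemma bddBelow_price_feasSet (hH : 0 ≤ H) :
    BddBelow (priceF m.2.1 m.2.2 '' feasSet 𝒮 Ψ aLow H m.1) := by
  refine ⟨aLow - N * (‖m.2.1‖ + ‖m.2.2‖) * H, ?_⟩
  rintro _ ⟨q, hq, rfl⟩
  have hdiff := neg_le_of_abs_le <| abs_priceF_sub_priceF_le m.2.1 m.2.2 0 0 q
  have hpos : N * (‖m.2.1‖ + ‖m.2.2‖) * ‖q.2‖ ≤ N * (‖m.2.1‖ + ‖m.2.2‖) * H := by
    gcongr
    exact norm_positions_le_of_mem_feasSet hH hq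
  have hcash : priceF 0 0 q = q.1 := by simp [priceF]
  rw [sub_zero, sub_zero, hcash] at hdiff
  linarith [hq.1]

lemma nearOptimalSet_nonempty (ha : aLow ≤ 0) (hH : 0 ≤ H) (hγ : 0 < γ) :
    (nearOptimalSet 𝒮 Ψ aLow H γ m).Nonempty := by
  have hne : (feasSet 𝒮 Ψ aLow H m.1).Nonempty := ⟨0, zero_mem_feasSet ha hH⟩
  obtain ⟨_, ⟨q, hq, rfl⟩, hlt⟩ := Real.lt_sInf_add_pos (hne.image (priceF m.2.1 m.2.2)) hγ
  refine ⟨q, hq, fun q' hq' => hlt.le.trans ?_⟩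
  gcongr
  exact csInf_le (bddBelow_price_feasSet hH) (Set.mem_image_of_mem _ hq')

lemma exists_price_lineMap_slaterStrategy_lt (q : Strategy N) (hγ : 0 < γ) :
    ∃ t ∈ Set.Ioc (0 : ℝ) 1, priceF m.2.1 m.2.2 (AffineMap.lineMap q (slaterStrategy N H) t) <
      priceF m.2.1 m.2.2 q + γ := by
  have hcont : Continuous fun t : ℝ =>
      priceF m.2.1 m.2.2 (AffineMap.lineMap q (slaterStrategy N H) t) :=
    continuous_priceF.comp ((continuous_const (y := m)).prodMk AffineMap.lineMap_continuous)
  have hlt : ∀ᶠ t in 𝓝[>] (0 : ℝ), priceF m.2.1 m.2.2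
      (AffineMap.lineMap q (slaterStrategy N H) t) < priceF m.2.1 m.2.2 q + γ :=
    nhdsWithin_le_nhds <| hcont.continuousAt.eventually_lt_const (by simpa using hγ)
  have hIoc : ∀ᶠ t in 𝓝[>] (0 : ℝ), t ∈ Set.Ioc 0 1 := Ioc_mem_nhdsGT zero_lt_one
  exact (hIoc.and hlt).exists

lemma eventually_closedBall_subset_feasSet
    (hΨ : EquicontinuousOn (fun (S : 𝒮) K => strikePayoff Ψ K S) B) (hH : 0 < H)
    {s q : Strategy N} {r t : ℝ} (hr : 0 < r)
    (hs : ∀ K ∈ B, Metric.closedBall s r ⊆ feasSet 𝒮 Ψ aLow H K) {K₀ : Fin N → ℝ} (hK₀ : K₀ ∈ B)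
    (hq : q ∈ feasSet 𝒮 Ψ aLow H K₀) (ht : t ∈ Set.Ioc (0 : ℝ) 1) :
    ∀ᶠ K in 𝓝[B] K₀,
      Metric.closedBall (AffineMap.lineMap q s t) (t * r / 2) ⊆ feasSet 𝒮 Ψ aLow H K := by
  have hκ : 0 < t * r / 2 := by have := ht.1; positivity
  filter_upwards [eventually_add_cash_mem_feasSet hΨ hH hK₀ hκ, self_mem_nhdsWithin] with K hK hKB
  refine (Metric.closedBall_subset_closedBall' ?_).trans
    (closedBall_lineMap_subset convex_feasSet (hK.1 q hq) (hs K hKB) ht.1 ht.2)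
  have hdist : dist (AffineMap.lineMap q s t) (AffineMap.lineMap (q + (t * r / 2, 0, 0)) s t) ≤
      t * r / 2 := by
    have hdiff : AffineMap.lineMap q s t - AffineMap.lineMap (q + (t * r / 2, 0, 0)) s t =
        -((1 - t) • ((t * r / 2, 0, 0) : Strategy N)) := by
      simp only [AffineMap.lineMap_apply_module]
      module
    have hnorm : ‖((t * r / 2, 0, 0) : Strategy N)‖ = t * r / 2 := by
      simp [Prod.norm_def, abs_of_pos ht.1, abs_of_pos hr, hκ.le]
    rw [dist_eq_norm, hdiff, norm_neg, norm_smul, hnorm, Real.norm_of_nonneg (by linarith [ht.2])]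
    exact mul_le_of_le_one_left hκ.le (by linarith [ht.1])
  linarith

lemma eventually_forall_feasSet_price_le
    (hΨ : EquicontinuousOn (fun (S : 𝒮) K => strikePayoff Ψ K S) B) (hH : 0 < H)
    {P : Set ((Fin N → ℝ) × (Fin N → ℝ))} {m₀ : MarketParams N} (hm₀ : m₀ ∈ B ×ˢ P) {v : ℝ}
    (hv : ∀ q ∈ feasSet 𝒮 Ψ aLow H m₀.1, v ≤ priceF m₀.2.1 m₀.2.2 q) (hγ : 0 < γ) :
    ∀ᶠ m in 𝓝[B ×ˢ P] m₀, ∀ q ∈ feasSet 𝒮 Ψ aLow H m.1, v ≤ priceF m.2.1 m.2.2 q + γ := by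
  have hstrike : Tendsto Prod.fst (𝓝[B ×ˢ P] m₀) (𝓝[B] m₀.1) :=
    continuous_fst.continuousWithinAt.tendsto_nhdsWithin fun _ hm => hm.1
  have hprice : ∀ᶠ m in 𝓝[B ×ˢ P] m₀,
      N * (‖m₀.2.1 - m.2.1‖ + ‖m₀.2.2 - m.2.2‖) * H < γ / 2 :=
    nhdsWithin_le_nhds <| Continuous.continuousAt (by fun_prop) |>.eventually_lt_const <| by
      simpa using hγ
  filter_upwards [hprice,
    hstrike.eventually (eventually_add_cash_mem_feasSet hΨ hH hm₀.1 (half_pos hγ))] with m hm hadd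
  intro q hq
  have hdiff := le_of_abs_le <| abs_priceF_sub_priceF_le m₀.2.1 m₀.2.2 m.2.1 m.2.2 q
  have hpos : N * (‖m₀.2.1 - m.2.1‖ + ‖m₀.2.2 - m.2.2‖) * ‖q.2‖ ≤
      N * (‖m₀.2.1 - m.2.1‖ + ‖m₀.2.2 - m.2.2‖) * H := by
    gcongr
    exact norm_positions_le_of_mem_feasSet hH.le hq
  have hv' := hv _ (hadd.2 q hq)
  rw [priceF_add_cash] at hv'
  linarith

lemma exists_eventually_mem_nearOptimalSet
    (hΨ : EquicontinuousOn (fun (S : 𝒮) K => strikePayoff Ψ K S) B) {C : ℝ}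
    (hC : ∀ K ∈ B, ∀ S ∈ 𝒮, ‖strikePayoff Ψ K S‖ ≤ C) (ha : aLow ≤ 0) (hH : 0 < H)
    {P : Set ((Fin N → ℝ) × (Fin N → ℝ))} {m₀ : MarketParams N} (hm₀ : m₀ ∈ B ×ˢ P) (hγ : 0 < γ) :
    ∃ q₀, ∀ᶠ z in 𝓝[B ×ˢ P] m₀ ×ˢ 𝓝 q₀, z.2 ∈ nearOptimalSet 𝒮 Ψ aLow H γ z.1 := by
  have hγ' : 0 < γ / 4 := by positivity
  obtain ⟨r, hr, hslater⟩ := exists_closedBall_slaterStrategy_subset_feasSet ha hH hC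
  obtain ⟨q, hq, hqopt⟩ := nearOptimalSet_nonempty (𝒮 := 𝒮) (Ψ := Ψ) (m := m₀) ha hH.le hγ'
  obtain ⟨t, ht, htprice⟩ := exists_price_lineMap_slaterStrategy_lt (H := H) (m := m₀) q hγ'
  have hball := eventually_closedBall_subset_feasSet hΨ hH hr hslater hm₀.1 hq ht
  have hstrike : Tendsto Prod.fst (𝓝[B ×ˢ P] m₀) (𝓝[B] m₀.1) :=
    continuous_fst.continuousWithinAt.tendsto_nhdsWithin fun _ hm => hm.1
  set q₀ := AffineMap.lineMap q (slaterStrategy N H) t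
  have hfeas : ∀ᶠ z in 𝓝[B ×ˢ P] m₀ ×ˢ 𝓝 q₀, z.2 ∈ feasSet 𝒮 Ψ aLow H z.1.1 :=
    ((hstrike.eventually hball).prod_mk
      (Metric.closedBall_mem_nhds q₀ (half_pos (mul_pos ht.1 hr)))).mono fun z hz => hz.1 hz.2
  have hprice : ∀ᶠ z in 𝓝[B ×ˢ P] m₀ ×ˢ 𝓝 q₀,
      priceF z.1.2.1 z.1.2.2 z.2 < priceF m₀.2.1 m₀.2.2 q + γ / 4 := by
    have hle : 𝓝[B ×ˢ P] m₀ ×ˢ 𝓝 q₀ ≤ 𝓝 (m₀, q₀) :=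
      (prod_mono_left _ nhdsWithin_le_nhds).trans_eq nhds_prod_eq.symm
    exact hle <| continuous_priceF.continuousAt.eventually_lt_const htprice
  have hvalue := eventually_forall_feasSet_price_le hΨ hH hm₀
    (fun q' hq' => sub_le_iff_le_add.2 (hqopt q' hq')) (half_pos hγ)
  refine ⟨q₀, ?_⟩
  filter_upwards [hfeas, hprice, hvalue.prod_inl _] with z hz hzprice hzvalue
  exact ⟨hz, fun q' hq' => by linarith [hzvalue q' hq']⟩

end NearOptimal

section Network

/-- The vector `(K, π⁺, π⁻) ∈ ℝ^{3N}` that a network receives as input. -/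
def encodeMarket (m : MarketParams N) : Fin (N + N + N) → ℝ :=
  Fin.append (Fin.append m.1 m.2.1) m.2.2

lemma continuous_encodeMarket : Continuous (encodeMarket (N := N)) := by
  unfold encodeMarket
  fun_prop

lemma injective_encodeMarket : Function.Injective (encodeMarket (N := N)) :=
  (Fin.appendEquiv (N + N) N).injective.comp <|
    ((Fin.appendEquiv N N).injective.prodMap Function.injective_id).comp
      (Equiv.prodAssoc _ _ _).symm.injective

lemma isLinearMap_outStrat : IsLinearMap ℝ (outStrat (N := N)) where
  map_add _ _ := rfl
  map_smul _ _ := rfl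

lemma continuous_outStrat : Continuous (outStrat (N := N)) := by
  unfold outStrat
  fun_prop

lemma surjective_outStrat : Function.Surjective (outStrat (N := N)) := by
  rintro ⟨a, h, h'⟩
  refine ⟨Fin.append (Fin.append (fun _ : Fin 1 => a) h) h', Prod.ext ?_ (Prod.ext ?_ ?_)⟩
  · exact (Fin.append_left _ _ (Fin.castAdd N (0 : Fin 1))).trans (Fin.append_left _ _ _)
  · exact funext fun i => (Fin.append_left _ _ (Fin.natAdd 1 i)).trans (Fin.append_right _ _ _)
  · exact funext fun i => Fin.append_right _ _ i

variable {𝒮 : Set (Fin d → ℝ)} {Ψ : Fin N → (Fin d → ℝ) → ℝ → ℝ} {aLow H γ : ℝ}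
  {B : Set (Fin N → ℝ)} {P : Set ((Fin N → ℝ) × (Fin N → ℝ))}

lemma exists_isNN_mem_nearOptimalSet {σ : ℝ → ℝ} (hσ : Continuous σ)
    (hσpoly : ¬∃ p : ℝ[X], ∀ t, σ t = p.eval t) (hB : IsCompact B) (hP : IsCompact P)
    (hΨ : EquicontinuousOn (fun (S : 𝒮) K => strikePayoff Ψ K S) B) {C : ℝ}
    (hC : ∀ K ∈ B, ∀ S ∈ 𝒮, ‖strikePayoff Ψ K S‖ ≤ C) (ha : aLow ≤ 0) (hH : 0 < H) (hγ : 0 < γ) :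
    ∃ F, IsNN σ (N + N + N) (1 + N + N) F ∧
      ∀ m ∈ B ×ˢ P, outStrat (F (encodeMarket m)) ∈ nearOptimalSet 𝒮 Ψ aLow H γ m := by
  have : CompactSpace ↥(B ×ˢ P) := isCompact_iff_compactSpace.1 (hB.prod hP)
  have hopt (m : ↥(B ×ˢ P)) : ∃ O : Fin (1 + N + N) → ℝ, ∀ᶠ z in 𝓝 (m, O),
      outStrat z.2 ∈ nearOptimalSet 𝒮 Ψ aLow H γ z.1 := by
    obtain ⟨q₀, hq₀⟩ := exists_eventually_mem_nearOptimalSet hΨ hC ha hH m.2 hγ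
    obtain ⟨O, rfl⟩ := surjective_outStrat q₀
    have hmarket : Tendsto Subtype.val (𝓝 m) (𝓝[B ×ˢ P] (m : MarketParams N)) :=
      (nhdsWithin_eq_map_subtype_coe m.2).ge
    refine ⟨O, ?_⟩
    rw [nhds_prod_eq]
    exact (hmarket.prodMap (continuous_outStrat.tendsto O)).eventually hq₀
  obtain ⟨F, hF, hFopt⟩ := exists_isNN_forall_mem hσ hσpoly
    (continuous_encodeMarket.comp continuous_subtype_val)
    (injective_encodeMarket.comp Subtype.val_injective)
    (fun m => convex_nearOptimalSet.is_linear_preimage isLinearMap_outStrat) hopt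
  exact ⟨F, hF, fun m hm => hFopt ⟨m, hm⟩⟩

end Network

lemma equicontinuousOn_strikePayoff {𝒮 : Set (Fin d → ℝ)} {Ψ : Fin N → (Fin d → ℝ) → ℝ → ℝ}
    {L : NNReal} {T : Set ℝ} (hΨ : ∀ i, ∀ S ∈ 𝒮, LipschitzOnWith L (Ψ i S) T) :
    EquicontinuousOn (fun (S : 𝒮) K => strikePayoff Ψ K S) (Set.univ.pi fun _ => T) := by
  refine (LipschitzOnWith.uniformEquicontinuousOn _ L fun S => ?_).equicontinuousOn
  refine LipschitzOnWith.of_dist_le_mul fun K hK K' hK' => ?_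
  refine (dist_pi_le_iff (by positivity)).2 fun i => ?_
  exact ((hΨ i S S.2).dist_le_mul _ (hK i trivial) _ (hK' i trivial)).trans
    (by gcongr; exact dist_le_pi_dist K K' i)

lemma norm_strikePayoff_le {𝒮 : Set (Fin d → ℝ)} {Ψ : Fin N → (Fin d → ℝ) → ℝ → ℝ} {C : ℝ}
    {T : Set ℝ} (hΨ : ∀ i, ∀ S ∈ 𝒮, Set.MapsTo (Ψ i S) T (Set.Icc 0 C)) :
    ∀ K ∈ Set.univ.pi fun _ => T, ∀ S ∈ 𝒮, ‖strikePayoff Ψ K S‖ ≤ |C| := fun _ hK S hS =>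
  (pi_norm_le_iff_of_nonneg (abs_nonneg C)).2 fun i =>
    have hi := hΨ i S hS (hK i trivial)
    abs_le_abs_of_nonneg hi.1 hi.2

end Market

theorem stmt15_general {d N : ℕ} {σ : ℝ → ℝ} (hσ : Continuous σ)
    (hσpoly : ¬∃ p : ℝ[X], ∀ t, σ t = p.eval t)
    {𝒮 : Set (Fin d → ℝ)} {Ψ : Fin N → (Fin d → ℝ) → ℝ → ℝ} {aLow H C ε δ : ℝ}
    {B : Set (Fin N → ℝ)} (hB : IsCompact B) {P : Set ((Fin N → ℝ) × (Fin N → ℝ))}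
    (hP : IsCompact P) (hΨ : EquicontinuousOn (fun (S : 𝒮) K => strikePayoff Ψ K S) B)
    (hC : ∀ K ∈ B, ∀ S ∈ 𝒮, ‖strikePayoff Ψ K S‖ ≤ C) (ha : aLow ≤ 0) (hH : 0 < H) (hδε : δ < ε) :
    ∃ F, IsNN σ (N + N + N) (1 + N + N) F ∧ ∀ m ∈ B ×ˢ P,
      ((∃ q ∈ feasSet 𝒮 Ψ aLow H m.1, priceF m.2.1 m.2.2 q ≤ -ε) →
        outStrat (F (encodeMarket m)) ∈ feasSet 𝒮 Ψ aLow H m.1 ∧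
        priceF m.2.1 m.2.2 (outStrat (F (encodeMarket m))) ≤ -δ) ∧
      ((∀ q ∈ feasSet 𝒮 Ψ aLow H m.1, 0 ≤ priceF m.2.1 m.2.2 q) →
        outStrat (F (encodeMarket m)) ∈ feasSet 𝒮 Ψ aLow H m.1 ∧
        priceF m.2.1 m.2.2 (outStrat (F (encodeMarket m))) ≤ ε - δ) := by
  obtain ⟨F, hF, hFopt⟩ :=
    exists_isNN_mem_nearOptimalSet hσ hσpoly hB hP hΨ hC ha hH (sub_pos.2 hδε)
  refine ⟨F, hF, fun m hm => ?_⟩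
  obtain ⟨hfeas, hopt⟩ := hFopt m hm
  refine ⟨fun ⟨q, hq, hprice⟩ => ⟨hfeas, by linarith [hopt q hq]⟩, fun _ => ⟨hfeas, ?_⟩⟩
  have hzero := hopt 0 (zero_mem_feasSet ha hH.le)
  rwa [(isLinearMap_priceF _ _).map_zero, zero_add] at hzero

/-- Theorem 2.6: for every `ε > 0` and `0 < δ < ε` there is a single neural
network which, for all market parameters `(K,π)` in the prescribed bounds, outputs a feasible
strategy that is a static arbitrage of magnitude `δ` whenever the market admits static
arbitrage of magnitude `ε`, and has price at most `ε − δ` whenever the market is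
arbitrage-free. -/
theorem stmt15 {d N : ℕ} (σ : ℝ → ℝ) (hσcont : Continuous σ)
    (hσnonpoly : ¬ ∃ p : Polynomial ℝ, ∀ t : ℝ, σ t = p.eval t)
    (𝒮 : Set (Fin d → ℝ)) (Ψ : Fin N → (Fin d → ℝ) → ℝ → ℝ)
    (Kbar πbar Hbar CΨ : ℝ) (LΨ : NNReal) (aLow : ℝ)
    (hKbar : 0 < Kbar) (hπbar : 0 < πbar) (hHbar : 0 < Hbar) (haLow : aLow ≤ 0)
    (hΨLip : ∀ i : Fin N, ∀ S ∈ 𝒮, LipschitzOnWith LΨ (Ψ i S) (Set.Icc 0 Kbar))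
    (hΨbd : ∀ i : Fin N, ∀ S ∈ 𝒮, ∀ k ∈ Set.Icc (0 : ℝ) Kbar,
      0 ≤ Ψ i S k ∧ Ψ i S k ≤ CΨ) :
    ∀ ε δ : ℝ, 0 < δ → δ < ε →
      ∃ F : (Fin (N + N + N) → ℝ) → (Fin (1 + N + N) → ℝ),
        IsNN σ (N + N + N) (1 + N + N) F ∧
        ∀ K πp πm : Fin N → ℝ,
          (∀ i, K i ∈ Set.Icc 0 Kbar) → (∀ i, πp i ∈ Set.Icc 0 πbar) →
          (∀ i, πm i ∈ Set.Icc 0 πbar) →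
          ((∃ q ∈ feasSet 𝒮 Ψ aLow Hbar K, priceF πp πm q ≤ -ε) →
            outStrat (F (Fin.append (Fin.append K πp) πm)) ∈ feasSet 𝒮 Ψ aLow Hbar K ∧
            priceF πp πm (outStrat (F (Fin.append (Fin.append K πp) πm))) ≤ -δ) ∧
          ((∀ q ∈ feasSet 𝒮 Ψ aLow Hbar K, 0 ≤ priceF πp πm q) →
            outStrat (F (Fin.append (Fin.append K πp) πm)) ∈ feasSet 𝒮 Ψ aLow Hbar K ∧
            priceF πp πm (outStrat (F (Fin.append (Fin.append K πp) πm))) ≤ ε - δ) := by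
  intro ε δ _ hδε
  have hbox (r : ℝ) : IsCompact (Set.univ.pi fun _ : Fin N => Set.Icc 0 r) :=
    isCompact_univ_pi fun _ => isCompact_Icc
  obtain ⟨F, hF, harb⟩ := stmt15_general hσcont hσnonpoly (hbox Kbar) ((hbox πbar).prod (hbox πbar))
    (equicontinuousOn_strikePayoff hΨLip) (norm_strikePayoff_le hΨbd) haLow hHbar hδε
  exact ⟨F, hF, fun K πp πm hK hp hm =>
    harb (K, πp, πm) ⟨fun i _ => hK i, fun i _ => hp i, fun i _ => hm i⟩⟩
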